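/- Let a_0(n) = 2 and a_1(n) = −3 for all n. There exists a constant C > 0 such that for every f ∈ C[0,1] and every n ≥ 1, sup_{x ∈ [0,1]} |D_n^{M,1}(f; x) − f(x)| ≤ C ω_2(f; 1/√n), where ω_2(f; δ) = sup{ |f(x + h) − 2f(x) + f(x − h)| : 0 < h ≤ δ, x ± h ∈ [0,1] } is the second-order modulus of smoothness. -/

import Mathlib

open Filter Topology

/-- Bernstein basis polynomial `p_{n,k}(x)`, zero when `k < 0` or `k > n`. -/
noncomputable def bern (n : ℕ) (k : ℤ) (x : ℝ) : ℝ :=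
  if 0 ≤ k ∧ k ≤ (n : ℤ) then (n.choose k.toNat : ℝ) * x ^ k.toNat * (1 - x) ^ (n - k.toNat)
  else 0

/-- Modified Bernstein basis `p_{n,k}^{M,1}(x)` of Khosravian-Arab et al. -/
noncomputable def pM1 (a0 a1 : ℕ → ℝ) (n : ℕ) (k : ℤ) (x : ℝ) : ℝ :=
  (a1 n * x + a0 n) * bern (n - 1) k x + (a1 n * (1 - x) + a0 n) * bern (n - 1) (k - 1) x

/-- First-order modified Durrmeyer operator `D_n^{M,1}(f;x)`. -/
noncomputable def DM1 (a0 a1 : ℕ → ℝ) (n : ℕ) (f : ℝ → ℝ) (x : ℝ) : ℝ :=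
  ((n : ℝ) + 1) * ∑ k ∈ Finset.range (n + 1),
    pM1 a0 a1 n k x * ∫ t in (0:ℝ)..1, bern n k t * f t

/-- Second-order modulus of smoothness of `f` on `[0,1]`. -/
noncomputable def omega2 (f : ℝ → ℝ) (δ : ℝ) : ℝ :=
  sSup {v | ∃ x h : ℝ, 0 < h ∧ h ≤ δ ∧ x - h ∈ Set.Icc (0:ℝ) 1 ∧ x + h ∈ Set.Icc (0:ℝ) 1 ∧
    v = |f (x + h) - 2 * f x + f (x - h)|}

/-!
The operator reproduces affine functions, and it is dominated in absolute value by `2 P`, where `P`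
is the positive operator obtained from the coefficients `a₀ = 1`, `a₁ = 0`, whose second central
moment is at most `2 / n`. So it is enough to approximate `f` by an affine function `ℓ` with
`|f t - ℓ t| ≤ (√n |t - x| + 2)² ω₂(f; 1/√n)`. The interpolant of `f` at the ends of an interval
`[a, a + 1/√n]` containing `x` will do: the error is at most `ω₂(f; 1/√n)` on that interval, and
steps of length `1/√n` out of it make the error grow quadratically, because its second differences
are bounded.
-/

open Set MeasureTheory

section Bernstein

lemma bern_natCast (n k : ℕ) (x : ℝ) : bern n k x = (bernsteinPolynomial ℝ n k).eval x := by
  by_cases hk : k ≤ n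
  · simp [bern, bernsteinPolynomial, hk]
  · simp [bern, bernsteinPolynomial.eq_zero_of_lt ℝ (not_le.mp hk), hk]

lemma bern_nonneg (n : ℕ) (k : ℤ) {x : ℝ} (hx : x ∈ Icc (0 : ℝ) 1) : 0 ≤ bern n k x := by
  have hx₀ := hx.1
  have hx₁ : 0 ≤ 1 - x := sub_nonneg.mpr hx.2
  unfold bern
  split_ifs <;> positivity

lemma continuous_bern (n : ℕ) (k : ℤ) : Continuous (bern n k) := by
  unfold bern
  split_ifs <;> fun_prop

lemma sum_bern (n : ℕ) (x : ℝ) : ∑ k ∈ Finset.range (n + 1), bern n k x = 1 := by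
  simp_rw [bern_natCast]
  rw [← Polynomial.eval_finsetSum, bernsteinPolynomial.sum, Polynomial.eval_one]

lemma sum_bern_mul_natCast (n : ℕ) (x : ℝ) :
    ∑ k ∈ Finset.range (n + 1), bern n k x * k = n * x := by
  have h := congrArg (Polynomial.eval x) (bernsteinPolynomial.sum_smul ℝ n)
  simpa [Polynomial.eval_finsetSum, bern_natCast, mul_comm] using h

lemma sum_bern_mul_natCast_mul_sub_one (n : ℕ) (x : ℝ) :
    ∑ k ∈ Finset.range (n + 1), bern n k x * (k * (k - 1)) = n * (n - 1) * x ^ 2 := by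
  have hcast (k : ℕ) : ((k * (k - 1) : ℕ) : ℝ) = k * (k - 1) := by cases k <;> simp
  have h := congrArg (Polynomial.eval x) (bernsteinPolynomial.sum_mul_smul ℝ n)
  simp only [Polynomial.eval_finsetSum, nsmul_eq_mul, Polynomial.eval_mul, Polynomial.eval_natCast,
    Polynomial.eval_pow, Polynomial.eval_X, hcast] at h
  simpa only [bern_natCast, mul_comm] using h

lemma sum_bern_mul_quadratic (n : ℕ) (x a b c : ℝ) :
    ∑ k ∈ Finset.range (n + 1), bern n k x * (a * (k * (k - 1)) + b * k + c) =
      a * (n * (n - 1) * x ^ 2) + b * (n * x) + c := by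
  simp_rw [mul_add, mul_left_comm _ a, mul_left_comm _ b, mul_comm _ c, Finset.sum_add_distrib,
    ← Finset.mul_sum, sum_bern, sum_bern_mul_natCast, sum_bern_mul_natCast_mul_sub_one, mul_one]

lemma id_mul_bern (n k : ℕ) (t : ℝ) :
    t * bern n k t = (k + 1) / (n + 1) * bern (n + 1) (k + 1 : ℕ) t := by
  have hchoose : ((n : ℝ) + 1) * n.choose k = (n + 1).choose (k + 1) * ((k : ℝ) + 1) := by
    exact_mod_cast Nat.add_one_mul_choose_eq n k
  simp only [bern_natCast, bernsteinPolynomial, Polynomial.eval_mul, Polynomial.eval_natCast,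
    Polynomial.eval_pow, Polynomial.eval_X, Polynomial.eval_sub, Polynomial.eval_one,
    Nat.add_sub_add_right]
  field_simp
  linear_combination t ^ (k + 1) * (1 - t) ^ (n - k) * hchoose

lemma integral_bern_succ {n k : ℕ} (hk : k < n) :
    ∫ t in (0 : ℝ)..1, bern n (k + 1 : ℕ) t = ∫ t in (0 : ℝ)..1, bern n k t := by
  have hint (j : ℕ) : IntervalIntegrable (bern n j) volume 0 1 :=
    (continuous_bern n j).intervalIntegrable 0 1
  have hderiv (t : ℝ) : HasDerivAt (fun t => (bernsteinPolynomial ℝ (n + 1) (k + 1)).eval t)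
      ((n + 1) * (bern n k t - bern n (k + 1 : ℕ) t)) t := by
    rw [bern_natCast, bern_natCast]
    simpa [bernsteinPolynomial.derivative_succ_aux] using
      (bernsteinPolynomial ℝ (n + 1) (k + 1)).hasDerivAt t
  have h := intervalIntegral.integral_eq_sub_of_hasDerivAt (fun t _ => hderiv t)
    (((hint k).sub (hint (k + 1))).const_mul _)
  rw [bernsteinPolynomial.eval_at_1, bernsteinPolynomial.eval_at_0, if_neg (by lia),
    if_neg (by lia), intervalIntegral.integral_const_mul,
    intervalIntegral.integral_sub (hint k) (hint (k + 1)), sub_zero, mul_eq_zero] at h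
  exact (sub_eq_zero.mp (h.resolve_left (by positivity))).symm

lemma integral_bern {n k : ℕ} (hk : k ≤ n) :
    ∫ t in (0 : ℝ)..1, bern n k t = 1 / (n + 1) := by
  induction k with
  | zero =>
    have hbern (t : ℝ) : bern n (0 : ℕ) t = (1 - t) ^ n := by simp [bern]
    simp_rw [hbern]
    rw [intervalIntegral.integral_comp_sub_left (fun t => t ^ n) (1 : ℝ)]
    simp
  | succ k ih => rw [integral_bern_succ hk, ih (Nat.le_of_succ_le hk)]

end Bernstein

section DurrmeyerMean

/-- The functional `f ↦ (n + 1) ∫₀¹ p_{n,k}(t) f(t) dt`, whose values at `0 ≤ k ≤ n` are the data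
from which Durrmeyer operators build their approximation of `f`. For `k ≤ n` it is the mean of `f`
for the `Beta(k + 1, n - k + 1)` distribution. -/
noncomputable def durrmeyerMean (n k : ℕ) (f : ℝ → ℝ) : ℝ :=
  (n + 1) * ∫ t in (0 : ℝ)..1, bern n k t * f t

lemma intervalIntegrable_bern_mul (n : ℕ) (k : ℤ) {f : ℝ → ℝ}
    (hf : IntervalIntegrable f volume 0 1) :
    IntervalIntegrable (fun t => bern n k t * f t) volume 0 1 :=
  hf.continuousOn_mul (continuous_bern n k).continuousOn

lemma durrmeyerMean_sub (n k : ℕ) {f g : ℝ → ℝ} (hf : IntervalIntegrable f volume 0 1)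
    (hg : IntervalIntegrable g volume 0 1) :
    durrmeyerMean n k (fun t => f t - g t) = durrmeyerMean n k f - durrmeyerMean n k g := by
  simp only [durrmeyerMean, mul_sub (bern n k _)]
  rw [intervalIntegral.integral_sub (intervalIntegrable_bern_mul n k hf)
    (intervalIntegrable_bern_mul n k hg), mul_sub]

lemma abs_durrmeyerMean_le (n k : ℕ) {f g : ℝ → ℝ} (hg : IntervalIntegrable g volume 0 1)
    (hfg : ∀ t ∈ Icc (0 : ℝ) 1, |f t| ≤ g t) : |durrmeyerMean n k f| ≤ durrmeyerMean n k g := by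
  rw [durrmeyerMean, abs_mul, abs_of_nonneg (by positivity)]
  refine mul_le_mul_of_nonneg_left ?_ (by positivity)
  rw [← Real.norm_eq_abs]
  refine intervalIntegral.norm_integral_le_of_norm_le zero_le_one (.of_forall fun t ht => ?_)
    (intervalIntegrable_bern_mul n k hg)
  have ht' := Ioc_subset_Icc_self ht
  rw [norm_mul, Real.norm_of_nonneg (bern_nonneg n k ht'), Real.norm_eq_abs]
  exact mul_le_mul_of_nonneg_left (hfg t ht') (bern_nonneg n k ht')

lemma durrmeyerMean_one {n k : ℕ} (hk : k ≤ n) : durrmeyerMean n k (fun _ => 1) = 1 := by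
  simp only [durrmeyerMean, mul_one, integral_bern hk]
  field_simp

lemma durrmeyerMean_id_mul (n k : ℕ) (f : ℝ → ℝ) :
    durrmeyerMean n k (fun t => t * f t) =
      (k + 1) / (n + 2) * durrmeyerMean (n + 1) (k + 1) f := by
  have hmul (t : ℝ) : bern n k t * (t * f t) =
      (k + 1) / (n + 1) * (bern (n + 1) (k + 1 : ℕ) t * f t) := by
    rw [← mul_assoc, ← mul_assoc, mul_comm _ t, id_mul_bern]
  simp only [durrmeyerMean, hmul, intervalIntegral.integral_const_mul]
  push_cast
  field_simp
  ring

lemma durrmeyerMean_id {n k : ℕ} (hk : k ≤ n) :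
    durrmeyerMean n k (fun t => t) = (k + 1) / (n + 2) := by
  simpa [durrmeyerMean_one (Nat.succ_le_succ hk)] using durrmeyerMean_id_mul n k (fun _ => 1)

lemma durrmeyerMean_sq {n k : ℕ} (hk : k ≤ n) :
    durrmeyerMean n k (fun t => t ^ 2) = (k + 1) * (k + 2) / ((n + 2) * (n + 3)) := by
  simp_rw [sq]
  rw [durrmeyerMean_id_mul, durrmeyerMean_id (Nat.succ_le_succ hk)]
  push_cast
  field_simp
  ring

lemma durrmeyerMean_quadratic {n k : ℕ} (hk : k ≤ n) (a b c : ℝ) :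
    durrmeyerMean n k (fun t => a * t ^ 2 + b * t + c) =
      a * ((k + 1) * (k + 2) / ((n + 2) * (n + 3))) + b * ((k + 1) / (n + 2)) + c := by
  have hB := continuous_bern n k
  calc durrmeyerMean n k (fun t => a * t ^ 2 + b * t + c)
      = a * durrmeyerMean n k (fun t => t ^ 2) + b * durrmeyerMean n k (fun t => t) +
          c * durrmeyerMean n k (fun _ => 1) := by
        simp only [durrmeyerMean, mul_add, mul_left_comm (bern n k _), mul_comm _ c, mul_one]
        rw [intervalIntegral.integral_add, intervalIntegral.integral_add]
        · simp only [intervalIntegral.integral_const_mul]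
          ring
        all_goals exact Continuous.intervalIntegrable (by fun_prop) _ _
    _ = _ := by rw [durrmeyerMean_sq hk, durrmeyerMean_id hk, durrmeyerMean_one hk, mul_one]

end DurrmeyerMean

section ModifiedDurrmeyer

variable (a₀ a₁ : ℕ → ℝ) (n : ℕ)

lemma DM1_eq_sum_durrmeyerMean (f : ℝ → ℝ) (x : ℝ) :
    DM1 a₀ a₁ n f x = ∑ k ∈ Finset.range (n + 1), pM1 a₀ a₁ n k x * durrmeyerMean n k f := by
  simp only [DM1, durrmeyerMean, Finset.mul_sum, mul_left_comm]

lemma sum_pM1_succ_mul (g : ℕ → ℝ) (x : ℝ) :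
    ∑ k ∈ Finset.range (n + 2), pM1 a₀ a₁ (n + 1) k x * g k =
      ∑ k ∈ Finset.range (n + 1), bern n k x * ((a₁ (n + 1) * x + a₀ (n + 1)) * g k +
        (a₁ (n + 1) * (1 - x) + a₀ (n + 1)) * g (k + 1)) := by
  set α := a₁ (n + 1) * x + a₀ (n + 1)
  set β := a₁ (n + 1) * (1 - x) + a₀ (n + 1)
  have hsplit (k : ℕ) : pM1 a₀ a₁ (n + 1) k x * g k =
      α * (bern n k x * g k) + β * (bern n (k - 1) x * g k) := by
    simp only [pM1, Nat.add_sub_cancel]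
    ring
  have htop : bern n (n + 1 : ℕ) x = 0 := by simp [bern]
  have hbot : bern n ((0 : ℕ) - 1 : ℤ) x = 0 := by simp [bern]
  have hshift (k : ℕ) : ((k + 1 : ℕ) : ℤ) - 1 = k := by push_cast; ring
  simp_rw [hsplit]
  rw [Finset.sum_add_distrib, Finset.sum_range_succ,
    Finset.sum_range_succ' (fun k : ℕ => β * (bern n (k - 1) x * g k)), htop, hbot]
  simp only [hshift, zero_mul, mul_zero, add_zero]
  rw [← Finset.sum_add_distrib]
  exact Finset.sum_congr rfl fun k _ => by ring

lemma DM1_sub {f g : ℝ → ℝ} (hf : IntervalIntegrable f volume 0 1)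
    (hg : IntervalIntegrable g volume 0 1) (x : ℝ) :
    DM1 a₀ a₁ n (fun t => f t - g t) x = DM1 a₀ a₁ n f x - DM1 a₀ a₁ n g x := by
  simp only [DM1_eq_sum_durrmeyerMean, durrmeyerMean_sub _ _ hf hg, mul_sub,
    Finset.sum_sub_distrib]

lemma DM1_succ_quadratic (a b c x : ℝ) :
    DM1 a₀ a₁ (n + 1) (fun t => a * t ^ 2 + b * t + c) x =
      a * (((2 * a₀ (n + 1) + a₁ (n + 1)) * (n * (n - 1) * x ^ 2 + 4 * n * x + 2) +
        (a₁ (n + 1) * (1 - x) + a₀ (n + 1)) * (2 * n * x + 4)) / ((n + 3) * (n + 4))) +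
      b * (((2 * a₀ (n + 1) + a₁ (n + 1)) * (n * x + 1) +
        (a₁ (n + 1) * (1 - x) + a₀ (n + 1))) / (n + 3)) +
      c * (2 * a₀ (n + 1) + a₁ (n + 1)) := by
  rw [DM1_eq_sum_durrmeyerMean, sum_pM1_succ_mul]
  set α := a₁ (n + 1) * x + a₀ (n + 1)
  set β := a₁ (n + 1) * (1 - x) + a₀ (n + 1)
  have hαβ : 2 * a₀ (n + 1) + a₁ (n + 1) = α + β := by ring
  rw [hαβ]
  have hterm : ∀ k ∈ Finset.range (n + 1),
      bern n k x * (α * durrmeyerMean (n + 1) k (fun t => a * t ^ 2 + b * t + c) +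
        β * durrmeyerMean (n + 1) (k + 1) (fun t => a * t ^ 2 + b * t + c)) =
      bern n k x * ((α + β) * a / ((n + 3) * (n + 4)) * (k * (k - 1)) +
        ((4 * (α + β) + 2 * β) * a / ((n + 3) * (n + 4)) + (α + β) * b / (n + 3)) * k +
        ((2 * (α + β) + 4 * β) * a / ((n + 3) * (n + 4)) + (α + 2 * β) * b / (n + 3) +
          (α + β) * c)) := by
    intro k hk
    have hkn : k ≤ n := Nat.lt_succ_iff.mp (Finset.mem_range.mp hk)
    rw [durrmeyerMean_quadratic (Nat.le_succ_of_le hkn),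
      durrmeyerMean_quadratic (Nat.succ_le_succ hkn)]
    push_cast
    field_simp
    ring
  rw [Finset.sum_congr rfl hterm, sum_bern_mul_quadratic]
  field_simp
  ring

lemma abs_DM1_le {f g : ℝ → ℝ} {c x : ℝ} (hg : IntervalIntegrable g volume 0 1)
    (hfg : ∀ t ∈ Icc (0 : ℝ) 1, |f t| ≤ g t) (hx : x ∈ Icc (0 : ℝ) 1)
    (hα : |a₁ n * x + a₀ n| ≤ c) (hβ : |a₁ n * (1 - x) + a₀ n| ≤ c) :
    |DM1 a₀ a₁ n f x| ≤ c * DM1 (fun _ => 1) (fun _ => 0) n g x := by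
  have hp (k : ℤ) : |pM1 a₀ a₁ n k x| ≤ c * pM1 (fun _ => 1) (fun _ => 0) n k x := by
    have hB₁ := bern_nonneg (n - 1) k hx
    have hB₂ := bern_nonneg (n - 1) (k - 1) hx
    calc |pM1 a₀ a₁ n k x|
        ≤ |a₁ n * x + a₀ n| * bern (n - 1) k x +
            |a₁ n * (1 - x) + a₀ n| * bern (n - 1) (k - 1) x := by
          refine (abs_add_le _ _).trans_eq ?_
          rw [abs_mul, abs_mul, abs_of_nonneg hB₁, abs_of_nonneg hB₂]
      _ ≤ c * bern (n - 1) k x + c * bern (n - 1) (k - 1) x := by gcongr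
      _ = c * pM1 (fun _ => 1) (fun _ => 0) n k x := by simp [pM1, mul_add]
  simp only [DM1_eq_sum_durrmeyerMean, Finset.mul_sum, ← mul_assoc]
  refine (Finset.abs_sum_le_sum_abs _ _).trans (Finset.sum_le_sum fun k _ => ?_)
  rw [abs_mul]
  exact mul_le_mul (hp k) (abs_durrmeyerMean_le n k hg hfg) (abs_nonneg _)
    ((abs_nonneg _).trans (hp k))

lemma DM1_two_neg_three_affine (b c x : ℝ) :
    DM1 (fun _ => 2) (fun _ => -3) (n + 1) (fun t => b * t + c) x = b * x + c := by
  have h := DM1_succ_quadratic (fun _ => 2) (fun _ => -3) n 0 b c x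
  simp only [zero_mul, zero_add] at h
  rw [h]
  field_simp
  ring

lemma DM1_one_zero_add_mul_sq_le {x : ℝ} (hx : x ∈ Icc (0 : ℝ) 1) (c : ℝ) {d : ℝ} (hd : 0 ≤ d) :
    DM1 (fun _ => 1) (fun _ => 0) (n + 1) (fun t => c + d * (t - x) ^ 2) x ≤
      2 * c + 2 * d / (n + 1) := by
  have hexpand (t : ℝ) :
      c + d * (t - x) ^ 2 = d * t ^ 2 + -(2 * d * x) * t + (c + d * x ^ 2) := by ring
  have hmoment : DM1 (fun _ => 1) (fun _ => 0) (n + 1) (fun t => c + d * (t - x) ^ 2) x =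
      2 * c + d * ((4 * (n - 6) * (x * (1 - x)) + 8) / ((n + 3) * (n + 4))) := by
    simp_rw [hexpand]
    rw [DM1_succ_quadratic]
    field_simp
    ring
  have hvar : (4 * (n - 6) * (x * (1 - x)) + 8) / ((n + 3) * (n + 4)) ≤ 2 / ((n : ℝ) + 1) := by
    have hx₀ : 0 ≤ x * (1 - x) := mul_nonneg hx.1 (sub_nonneg.mpr hx.2)
    have hx₁ : x * (1 - x) ≤ 1 / 4 := by nlinarith [sq_nonneg (x - 1 / 2)]
    have hnum : 4 * (n - 6) * (x * (1 - x)) + 8 ≤ (n : ℝ) + 8 := by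
      nlinarith [mul_le_mul_of_nonneg_left hx₁ (n.cast_nonneg (α := ℝ))]
    rw [div_le_div_iff₀ (by positivity) (by positivity)]
    nlinarith [n.cast_nonneg (α := ℝ)]
  rw [hmoment, mul_comm 2 d, mul_div_assoc]
  gcongr

lemma abs_DM1_two_neg_three_sub_affine_le {f : ℝ → ℝ} (hf : IntervalIntegrable f volume 0 1)
    {c d p q x : ℝ} (hd : 0 ≤ d) (hx : x ∈ Icc (0 : ℝ) 1)
    (hfpq : ∀ t ∈ Icc (0 : ℝ) 1, |f t - (p * t + q)| ≤ c + d * (t - x) ^ 2) :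
    |DM1 (fun _ => 2) (fun _ => -3) (n + 1) f x - (p * x + q)| ≤ 4 * c + 4 * d / (n + 1) := by
  have haffine : IntervalIntegrable (fun t => p * t + q) volume 0 1 :=
    Continuous.intervalIntegrable (by fun_prop) _ _
  calc |DM1 (fun _ => 2) (fun _ => -3) (n + 1) f x - (p * x + q)|
      = |DM1 (fun _ => 2) (fun _ => -3) (n + 1) (fun t => f t - (p * t + q)) x| := by
        rw [DM1_sub _ _ _ hf haffine, DM1_two_neg_three_affine]
    _ ≤ 2 * DM1 (fun _ => 1) (fun _ => 0) (n + 1) (fun t => c + d * (t - x) ^ 2) x :=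
        abs_DM1_le _ _ _ (Continuous.intervalIntegrable (by fun_prop) _ _) hfpq hx
          (abs_le.mpr ⟨by linarith [hx.2], by linarith [hx.1]⟩)
          (abs_le.mpr ⟨by linarith [hx.1], by linarith [hx.2]⟩)
    _ ≤ 2 * (2 * c + 2 * d / (n + 1)) := by gcongr; exact DM1_one_zero_add_mul_sq_le n hx c hd
    _ = 4 * c + 4 * d / (n + 1) := by ring

end ModifiedDurrmeyer

section SecondDifferences

lemma abs_le_of_abs_second_diff_le {u : ℕ → ℝ} {N : ℕ} {A B w : ℝ} (h₀ : |u 0| ≤ A)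
    (h₁ : 1 ≤ N → |u 1 - u 0| ≤ B)
    (h₂ : ∀ i, i + 2 ≤ N → |u (i + 2) - 2 * u (i + 1) + u i| ≤ w) {m : ℕ} (hm : m ≤ N) :
    |u m| ≤ A + m * B + m * (m - 1) / 2 * w := by
  have hstep (i : ℕ) (hi : i + 1 ≤ N) : |u (i + 1) - u i| ≤ B + i * w := by
    induction i with
    | zero => simpa using h₁ hi
    | succ i ih =>
      calc |u (i + 2) - u (i + 1)|
          = |(u (i + 2) - 2 * u (i + 1) + u i) + (u (i + 1) - u i)| := by congr 1; ring
        _ ≤ w + (B + i * w) := (abs_add_le _ _).trans (add_le_add (h₂ i hi) (ih (by lia)))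
        _ = B + (i + 1 : ℕ) * w := by push_cast; ring
  induction m with
  | zero => simpa using h₀
  | succ m ih =>
    calc |u (m + 1)| = |u m + (u (m + 1) - u m)| := by congr 1; ring
      _ ≤ (A + m * B + m * (m - 1) / 2 * w) + (B + m * w) :=
        (abs_add_le _ _).trans (add_le_add (ih (by lia)) (hstep m hm))
      _ = A + (m + 1 : ℕ) * B + (m + 1 : ℕ) * ((m + 1 : ℕ) - 1) / 2 * w := by push_cast; ring

/-- The inequality `ω₂(f; δ) ≤ w` on `s`: every symmetric second difference of `f` with step at
most `δ` and endpoints in `s` is at most `w` in absolute value. The degenerate step `h = 0` is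
allowed, which forces `0 ≤ w` when `s` is nonempty. -/
def SecondDiffLE (f : ℝ → ℝ) (s : Set ℝ) (δ w : ℝ) : Prop :=
  ∀ ⦃y h : ℝ⦄, 0 ≤ h → h ≤ δ → y - h ∈ s → y + h ∈ s → |f (y + h) - 2 * f y + f (y - h)| ≤ w

namespace SecondDiffLE

variable {f : ℝ → ℝ} {s t : Set ℝ} {a b δ w M x : ℝ}

lemma mono (hf : SecondDiffLE f s δ w) (hts : t ⊆ s) : SecondDiffLE f t δ w :=
  fun _ _ h₀ hδ hl hr => hf h₀ hδ (hts hl) (hts hr)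

lemma nonneg (hf : SecondDiffLE f s δ w) (hδ : 0 ≤ δ) (hx : x ∈ s) : 0 ≤ w :=
  (abs_nonneg _).trans (hf (y := x) le_rfl hδ (by simpa) (by simpa))

lemma sub_affine (hf : SecondDiffLE f s δ w) (p q : ℝ) :
    SecondDiffLE (fun t => f t - (p * t + q)) s δ w := by
  intro y h h₀ hδ hl hr
  convert hf h₀ hδ hl hr using 2
  ring

lemma comp_neg (hf : SecondDiffLE f (Icc a b) δ w) :
    SecondDiffLE (fun t => f (-t)) (Icc (-b) (-a)) δ w := by
  intro y h h₀ hδ hl hr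
  convert hf (y := -y) h₀ hδ ⟨by linarith [hr.2], by linarith [hr.1]⟩
    ⟨by linarith [hl.2], by linarith [hl.1]⟩ using 2
  ring_nf

/-- Reflecting the nearer endpoint about `x` gives `2 |f x| ≤ w + sup |f|`. -/
lemma abs_le_of_zero_endpoints (hf : SecondDiffLE f (Icc a b) (b - a) w)
    (hM : ∀ t ∈ Icc a b, |f t| ≤ M) (ha : f a = 0) (hb : f b = 0) (hx : x ∈ Icc a b) :
    |f x| ≤ w := by
  set S := sSup ((fun t => |f t|) '' Icc a b)
  have hS : ∀ t ∈ Icc a b, |f t| ≤ S := fun t ht =>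
    le_csSup ⟨M, forall_mem_image.mpr hM⟩ (mem_image_of_mem _ ht)
  have hhalf : ∀ t ∈ Icc a b, |f t| ≤ (w + S) / 2 := by
    rintro t ⟨hat, htb⟩
    obtain ⟨r, hr, hdiff⟩ : ∃ r ∈ Icc a b, |f r - 2 * f t| ≤ w := by
      rcases le_total t ((a + b) / 2) with hmid | hmid
      · refine ⟨t + (t - a), ⟨by linarith, by linarith⟩, ?_⟩
        simpa [ha] using hf (y := t) (h := t - a) (by linarith) (by linarith)
          ⟨by linarith, by linarith⟩ ⟨by linarith, by linarith⟩
      · refine ⟨t - (b - t), ⟨by linarith, by linarith⟩, ?_⟩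
        simpa [hb, neg_add_eq_sub] using hf (y := t) (h := b - t) (by linarith) (by linarith)
          ⟨by linarith, by linarith⟩ ⟨by linarith, by linarith⟩
    have hbound := abs_sub (f r) (f r - 2 * f t)
    rw [sub_sub_cancel, abs_mul, abs_two] at hbound
    linarith [hS r hr]
  have hSle : S ≤ (w + S) / 2 := csSup_le ⟨_, mem_image_of_mem _ hx⟩ (forall_mem_image.mpr hhalf)
  linarith [hS x hx]

lemma abs_add_natCast_mul_le {A B : ℝ} (hf : SecondDiffLE f (Icc a b) δ w) (hδ : 0 ≤ δ) {m : ℕ}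
    (hxa : a ≤ x) (hxb : x + m * δ ≤ b) (hA : |f x| ≤ A)
    (hB : x + δ ≤ b → |f (x + δ) - f x| ≤ B) :
    |f (x + m * δ)| ≤ A + m * B + m * (m - 1) / 2 * w := by
  have hnode {i : ℕ} (hi : i ≤ m) : x + i * δ ≤ b := by
    have : (i : ℝ) * δ ≤ m * δ := by gcongr
    linarith
  refine abs_le_of_abs_second_diff_le (u := fun i => f (x + i * δ)) (by simpa)
    (fun hm => by simpa using hB (by simpa using hnode hm)) (fun i hi => ?_) le_rfl
  have hi₀ : 0 ≤ i * δ := by positivity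
  have hi₂ := hnode hi
  push_cast at hi₂ ⊢
  convert hf (y := x + (i + 1) * δ) hδ le_rfl ⟨by linarith, by linarith⟩
    ⟨by linarith, by linarith⟩ using 4 <;> ring_nf

lemma abs_le_of_zeros_left (hf : SecondDiffLE f (Icc a b) δ w) (hδ : 0 < δ) (hab : a + δ ≤ b)
    (hM : ∀ t ∈ Icc a (a + δ), |f t| ≤ M) (ha : f a = 0) (ha' : f (a + δ) = 0)
    (hx : x ∈ Icc a b) : |f x| ≤ ((x - a) / δ + 1) ^ 2 * w := by
  have hw : 0 ≤ w := hf.nonneg hδ.le hx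
  have hcell : ∀ t ∈ Icc a (a + δ), |f t| ≤ w := fun t ht =>
    abs_le_of_zero_endpoints (by simpa using hf.mono (Icc_subset_Icc_right hab)) hM ha ha' ht
  set m := ⌊(x - a) / δ⌋₊
  have hm : (m : ℝ) ≤ (x - a) / δ := Nat.floor_le (div_nonneg (sub_nonneg.mpr hx.1) hδ.le)
  have hmδ : m * δ ≤ x - a := (le_div_iff₀ hδ).mp hm
  have hmδ' : x - a < (m + 1) * δ := (div_lt_iff₀ hδ).mp (Nat.lt_floor_add_one _)
  obtain ⟨r, hrx⟩ : ∃ r, r + m * δ = x := ⟨x - m * δ, sub_add_cancel _ _⟩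
  have hr : r ∈ Icc a (a + δ) := ⟨by linarith, by linarith⟩
  have hfirst (hrb : r + δ ≤ b) : |f (r + δ) - f r| ≤ 3 * w := by
    have hr' : a + δ - (r - a) ∈ Icc a (a + δ) := ⟨by linarith [hr.2], by linarith [hr.1]⟩
    have hdiff := hf (y := a + δ) (h := r - a) (by linarith [hr.1]) (by linarith [hr.2])
      ⟨hr'.1, hr'.2.trans hab⟩ ⟨by linarith [hr.1], by linarith⟩
    rw [ha', mul_zero, sub_zero, show a + δ + (r - a) = r + δ by ring] at hdiff
    have hfr := abs_le.mp (hcell r hr)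
    have hfr' := abs_le.mp (hcell _ hr')
    rw [abs_le] at hdiff ⊢
    constructor <;> linarith
  have hm_sq : (m : ℝ) ≤ m * m := by exact_mod_cast Nat.le_mul_self m
  calc |f x| ≤ w + m * (3 * w) + m * (m - 1) / 2 * w :=
        hrx ▸ hf.abs_add_natCast_mul_le hδ.le hr.1 (hrx ▸ hx.2) (hcell r hr) hfirst
    _ = ((m + 1) ^ 2 - (m * m - m) / 2) * w := by ring
    _ ≤ (m + 1) ^ 2 * w := by gcongr; linarith
    _ ≤ ((x - a) / δ + 1) ^ 2 * w := by gcongr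

lemma abs_le_of_zeros_right (hf : SecondDiffLE f (Icc a b) δ w) (hδ : 0 < δ) (hab : a ≤ b - δ)
    (hM : ∀ t ∈ Icc (b - δ) b, |f t| ≤ M) (hb : f b = 0) (hb' : f (b - δ) = 0)
    (hx : x ∈ Icc a b) : |f x| ≤ ((b - x) / δ + 1) ^ 2 * w := by
  have h := hf.comp_neg.abs_le_of_zeros_left (x := -x) (M := M) hδ (by linarith)
    (fun t ht => hM (-t) ⟨by linarith [ht.2], by linarith [ht.1]⟩) (by simpa)
    (by simpa [neg_add_eq_sub] using hb') ⟨neg_le_neg hx.2, neg_le_neg hx.1⟩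
  simpa [neg_add_eq_sub] using h

lemma abs_le_of_zeros {l y : ℝ} (hf : SecondDiffLE f (Icc a b) δ w) (hδ : 0 < δ) (hal : a ≤ l)
    (hlb : l + δ ≤ b) (hM : ∀ t ∈ Icc l (l + δ), |f t| ≤ M) (hl : f l = 0) (hl' : f (l + δ) = 0)
    (hx : x ∈ Icc l (l + δ)) (hy : y ∈ Icc a b) : |f y| ≤ (|y - x| / δ + 2) ^ 2 * w := by
  have hw : 0 ≤ w := hf.nonneg hδ.le hy
  obtain ⟨d, hd, hdx, hfy⟩ : ∃ d, 0 ≤ d ∧ d ≤ |y - x| + δ ∧ |f y| ≤ (d / δ + 1) ^ 2 * w := by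
    rcases le_total l y with hly | hyl
    · exact ⟨y - l, sub_nonneg.mpr hly, by linarith [le_abs_self (y - x), hx.2],
        (hf.mono (Icc_subset_Icc_left hal)).abs_le_of_zeros_left hδ hlb hM hl hl' ⟨hly, hy.2⟩⟩
    · exact ⟨l + δ - y, by linarith, by linarith [neg_abs_le (y - x), hx.1],
        (hf.mono (Icc_subset_Icc_right hlb)).abs_le_of_zeros_right hδ (by linarith)
          (by simpa using hM) hl' (by simpa using hl) ⟨hy.1, by linarith⟩⟩
  calc |f y| ≤ (d / δ + 1) ^ 2 * w := hfy
    _ ≤ ((|y - x| + δ) / δ + 1) ^ 2 * w := by gcongr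
    _ = (|y - x| / δ + 2) ^ 2 * w := by field_simp; ring

lemma exists_affine_abs_sub_le (hf : SecondDiffLE f (Icc a b) δ w) (hδ : 0 < δ) (hab : a + δ ≤ b)
    (hM : ∀ t ∈ Icc a b, |f t| ≤ M) (hx : x ∈ Icc a b) :
    ∃ p q : ℝ, |f x - (p * x + q)| ≤ w ∧
      ∀ t ∈ Icc a b, |f t - (p * t + q)| ≤ (|t - x| / δ + 2) ^ 2 * w := by
  obtain ⟨l, hal, hlb, hlx, hxl⟩ : ∃ l, a ≤ l ∧ l + δ ≤ b ∧ l ≤ x ∧ x ≤ l + δ := by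
    rcases le_total (x + δ) b with h | h
    · exact ⟨x, hx.1, h, le_rfl, by linarith⟩
    · exact ⟨b - δ, by linarith, by linarith, by linarith, by linarith [hx.2]⟩
  set p := (f (l + δ) - f l) / δ with hp
  set q := f l - p * l with hq
  set F : ℝ → ℝ := fun t => f t - (p * t + q) with hF
  have hFl : F l = 0 := by simp [hF, hq]
  have hFl' : F (l + δ) = 0 := by
    simp only [hF, hq, hp]
    field_simp
    ring
  have hFdiff : SecondDiffLE F (Icc a b) δ w := hf.sub_affine p q
  obtain ⟨L, hL⟩ := isCompact_Icc.exists_bound_of_continuousOn (s := Icc a b)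
    (f := fun t : ℝ => p * t + q) (by fun_prop)
  have hFM : ∀ t ∈ Icc l (l + δ), |F t| ≤ M + L := fun t ht =>
    have ht' := Icc_subset_Icc hal hlb ht
    (abs_sub _ _).trans (add_le_add (hM t ht') (hL t ht'))
  exact ⟨p, q, abs_le_of_zero_endpoints (f := F)
    (by simpa using hFdiff.mono (Icc_subset_Icc hal hlb)) hFM hFl hFl' ⟨hlx, hxl⟩,
    fun _ ht => hFdiff.abs_le_of_zeros hδ hal hlb hFM hFl hFl' ⟨hlx, hxl⟩ ht⟩

end SecondDiffLE

end SecondDifferences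

lemma omega2_nonneg (f : ℝ → ℝ) (δ : ℝ) : 0 ≤ omega2 f δ := by
  refine Real.sSup_nonneg ?_
  rintro _ ⟨x, h, -, -, -, -, rfl⟩
  exact abs_nonneg _

lemma secondDiffLE_omega2 {f : ℝ → ℝ} {M : ℝ} (hM : ∀ t ∈ Icc (0 : ℝ) 1, |f t| ≤ M) (δ : ℝ) :
    SecondDiffLE f (Icc 0 1) δ (omega2 f δ) := by
  intro y h h₀ hδ hl hr
  rcases h₀.eq_or_lt with rfl | h₀
  · simpa [two_mul] using omega2_nonneg f δ
  refine le_csSup ⟨4 * M, ?_⟩ ⟨y, h, h₀, hδ, hl, hr, rfl⟩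
  rintro _ ⟨x, k, -, -, hl, hr, rfl⟩
  have hx : x ∈ Icc (0 : ℝ) 1 := ⟨by linarith [hl.1, hr.1], by linarith [hl.2, hr.2]⟩
  have hMl := abs_le.mp (hM _ hl)
  have hMx := abs_le.mp (hM _ hx)
  have hMr := abs_le.mp (hM _ hr)
  exact abs_le.mpr ⟨by linarith, by linarith⟩

theorem DM1_second_order_estimate_general {f : ℝ → ℝ} (hf : IntervalIntegrable f volume 0 1)
    {M : ℝ} (hM : ∀ t ∈ Icc (0 : ℝ) 1, |f t| ≤ M) {n : ℕ} (hn : 1 ≤ n) {x : ℝ}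
    (hx : x ∈ Icc (0 : ℝ) 1) :
    |DM1 (fun _ => 2) (fun _ => -3) n f x - f x| ≤ 41 * omega2 f (1 / Real.sqrt n) := by
  obtain ⟨m, rfl⟩ := Nat.exists_eq_add_of_le' hn
  set s := √(m + 1 : ℕ)
  set w := omega2 f (1 / s)
  have hw : 0 ≤ w := omega2_nonneg f _
  have hs : 1 ≤ s := Real.one_le_sqrt.mpr (by simp)
  have hs_sq : s ^ 2 = m + 1 := by
    rw [Real.sq_sqrt (Nat.cast_nonneg _), Nat.cast_succ]
  obtain ⟨p, q, hpq_x, hpq⟩ := (secondDiffLE_omega2 hM (1 / s)).exists_affine_abs_sub_le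
    (by positivity) (by rw [zero_add, div_le_one (by positivity)]; exact hs) hM hx
  have hquad : ∀ t ∈ Icc (0 : ℝ) 1,
      |f t - (p * t + q)| ≤ 8 * w + 2 * (m + 1) * w * (t - x) ^ 2 := fun t ht =>
    calc |f t - (p * t + q)| ≤ (|t - x| / (1 / s) + 2) ^ 2 * w := hpq t ht
      _ ≤ 2 * ((|t - x| / (1 / s)) ^ 2 + 2 ^ 2) * w := by gcongr; exact add_sq_le
      _ = 8 * w + 2 * (m + 1) * w * (t - x) ^ 2 := by
        rw [div_div_eq_mul_div, div_one, mul_pow, sq_abs, hs_sq]; ring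
  calc |DM1 (fun _ => 2) (fun _ => -3) (m + 1) f x - f x|
      ≤ |DM1 (fun _ => 2) (fun _ => -3) (m + 1) f x - (p * x + q)| + |p * x + q - f x| :=
        abs_sub_le _ _ _
    _ ≤ (4 * (8 * w) + 4 * (2 * (m + 1) * w) / (m + 1)) + w :=
        add_le_add (abs_DM1_two_neg_three_sub_affine_le m hf (by positivity) hx hquad)
          ((abs_sub_comm _ _).trans_le hpq_x)
    _ = 41 * w := by field_simp; ring

theorem DM1_second_order_estimate :
    ∃ C > (0:ℝ), ∀ f : ℝ → ℝ, ContinuousOn f (Set.Icc 0 1) →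
      ∀ n : ℕ, 1 ≤ n → ∀ x ∈ Set.Icc (0:ℝ) 1,
        |DM1 (fun _ => 2) (fun _ => -3) n f x - f x| ≤ C * omega2 f (1 / Real.sqrt n) := by
  refine ⟨41, by norm_num, fun f hf n hn x hx => ?_⟩
  obtain ⟨M, hM⟩ := isCompact_Icc.exists_bound_of_continuousOn hf
  exact DM1_second_order_estimate_general
    (hf.intervalIntegrable_of_Icc zero_le_one) hM hn hx
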